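/- Let N be a positive integer, δ₀ ∈ (0,1), and 0 < s < t < 1 with t − s ≥ δ₀. There exists ε > 0, depending only on N and δ₀, with the following property (non-optimality criterion): if F ⊆ ℝ^N is measurable with P_t(F) < ∞ and F = F₁ ∪ F₂ with F₁, F₂ measurable, |F₁ ∩ F₂| = 0, |F₁| > 0, 0 < |F₂| ≤ ε·min(1, |F₁|), and (1−t)·[P_t(F₁) + P_t(F₂) − P_t(F)] ≤ F_{s,t}(F₂)/2, then there exists a measurable set G with |G| = |F| and F_{s,t}(G) < F_{s,t}(F); moreover G can be taken to be either a ball of volume |F| or the dilation (1 + |F₂|/|F₁|)^{1/N} · F₁. -/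

import Mathlib

open MeasureTheory ENNReal

/-- Interaction energy `∫_A ∫_B |x-y|^{-(N+α)} dy dx` in `[0,∞]`. -/
noncomputable def interEnergy (N : ℕ) (α : ℝ)
    (A B : Set (EuclideanSpace ℝ (Fin N))) : ℝ≥0∞ :=
  ∫⁻ x in A, ∫⁻ y in B, ENNReal.ofReal (‖x - y‖ ^ (-((N : ℝ) + α))) ∂volume ∂volume

/-- The fractional `α`-perimeter `P_α(E) = ∫_E ∫_{Eᶜ} |x-y|^{-(N+α)} dy dx`. -/
noncomputable def fracPer (N : ℕ) (α : ℝ) (E : Set (EuclideanSpace ℝ (Fin N))) : ℝ≥0∞ :=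
  interEnergy N α E Eᶜ

/-- The free energy `F_{s,t}(E) = (1-t) P_t(E) - s P_s(E)`. -/
noncomputable def freeEnergy (N : ℕ) (s t : ℝ) (E : Set (EuclideanSpace ℝ (Fin N))) : ℝ :=
  (1 - t) * (fracPer N t E).toReal - s * (fracPer N s E).toReal

/-!
The mass `φ(h) = |{x ∈ A | x + h ∉ A}|` lost under a shift by `h` is subadditive in `h`, and
`P_α(A) = ∫ φ(h) |h|^{-(N+α)} dh`. Comparing this integral on consecutive dyadic shells by means
of `φ(2h) ≤ 2 φ(h)` gives, with constants depending only on `N`,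

* `|A|^{1-t/N} ≤ C (1-t) P_t(A)`,
* `(t-s) s P_s(A) ≤ C |A|^{(t-s)/N} (1-t) P_t(A)`,
* `t (1-t) P_t(B) ≤ C |B|^{1-t/N}` for balls `B`.

Put `X = (1-t) P_t(F₂)`. By the second bound a small `F₂` has energy at least `X/2`, so the
hypothesis on the deficit yields `F_{s,t}(F₁) + X/4 ≤ F_{s,t}(F)`. Dilating `F₁` to the volume
of `F` raises its energy by at most `|F₂|/|F₁|` times the positive part of `F_{s,t}(F₁)`. Unless
the ball of volume `|F|` beats `F`, that energy is at most the energy of the ball, and the first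
and third bounds show that the increase is at most a multiple of `(|F₂|/|F₁|)^{t/N} X`, which is
less than `X/4` for small `|F₂|/|F₁|`.
-/

open Module (finrank)
open scoped Pointwise NNReal

section GeometricSeries

lemma one_sub_two_rpow_neg_le {a : ℝ} (ha : 0 ≤ a) : 1 - (2 : ℝ) ^ (-a) ≤ a := by
  have hexp : Real.log 2 * -a + 1 ≤ (2 : ℝ) ^ (-a) := by
    rw [Real.rpow_def_of_pos two_pos]
    exact Real.add_one_le_exp _
  nlinarith [Real.log_two_lt_d9]

lemma half_le_one_sub_two_rpow_neg {a : ℝ} (ha : 0 ≤ a) (ha1 : a ≤ 1) :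
    a / 2 ≤ 1 - (2 : ℝ) ^ (-a) := by
  have bernoulli : (1 + -(1 / 2) : ℝ) ^ a ≤ 1 + a * -(1 / 2) :=
    rpow_one_add_le_one_add_mul_self (by norm_num) ha ha1
  have hinv : (2 : ℝ) ^ (-a) = (1 + -(1 / 2)) ^ a := by
    rw [Real.rpow_neg two_pos.le, ← Real.inv_rpow two_pos.le]
    norm_num
  linarith

lemma inv_two_pow_mul_rpow_neg_le {t : ℝ} (ht : t ≤ 1) (j : ℕ) :
    ((2 : ℝ) ^ j)⁻¹ * (1 / 2 ^ (j + 1)) ^ (-t) ≤ 2 * (2 ^ j) ^ (-(1 - t)) := by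
  have hpow : ((2 : ℝ) ^ j)⁻¹ * (2 ^ j) ^ t = (2 ^ j) ^ (-(1 - t)) := by
    rw [← Real.rpow_neg_one, ← Real.rpow_add (by positivity)]
    ring_nf
  calc ((2 : ℝ) ^ j)⁻¹ * (1 / 2 ^ (j + 1)) ^ (-t)
      = 2 ^ t * (2 ^ j) ^ (-(1 - t)) := by
        rw [one_div, Real.inv_rpow (by positivity), Real.rpow_neg (by positivity), inv_inv,
          pow_succ, Real.mul_rpow (by positivity) two_pos.le, ← hpow]
        ring
    _ ≤ 2 * (2 ^ j) ^ (-(1 - t)) := by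
        gcongr
        exact Real.rpow_le_self_of_one_le one_le_two ht

lemma tsum_ofReal_two_pow_rpow_neg (a : ℝ) :
    ∑' j : ℕ, ENNReal.ofReal (((2 : ℝ) ^ j) ^ (-a)) = (ENNReal.ofReal (1 - 2 ^ (-a)))⁻¹ := by
  have hpow (j : ℕ) :
      ENNReal.ofReal (((2 : ℝ) ^ j) ^ (-a)) = ENNReal.ofReal (2 ^ (-a)) ^ j := by
    rw [← ENNReal.ofReal_pow (by positivity), Real.rpow_pow_comm two_pos.le]
  simp_rw [hpow]
  rw [ENNReal.tsum_geometric, ENNReal.ofReal_sub _ (by positivity), ENNReal.ofReal_one]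

lemma mul_tsum_le_of_le_mul_two_pow_rpow {f : ℕ → ℝ≥0∞} {M : ℝ≥0∞} {a : ℝ} (ha : 0 < a)
    (ha1 : a ≤ 1) (hf : ∀ j, f j ≤ M * ENNReal.ofReal (((2 : ℝ) ^ j) ^ (-a))) :
    ENNReal.ofReal a * ∑' j, f j ≤ 2 * M := by
  have hratio : ENNReal.ofReal a * (ENNReal.ofReal (1 - 2 ^ (-a)))⁻¹ ≤ 2 := by
    rw [← div_eq_mul_inv]
    refine ENNReal.div_le_of_le_mul ?_
    rw [← ENNReal.ofReal_ofNat 2, ← ENNReal.ofReal_mul two_pos.le]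
    exact ENNReal.ofReal_le_ofReal (by linarith [half_le_one_sub_two_rpow_neg ha.le ha1])
  calc ENNReal.ofReal a * ∑' j, f j
      ≤ ENNReal.ofReal a * ∑' j : ℕ, M * ENNReal.ofReal (((2 : ℝ) ^ j) ^ (-a)) := by
        gcongr
        exact hf _
    _ = ENNReal.ofReal a * (ENNReal.ofReal (1 - 2 ^ (-a)))⁻¹ * M := by
        rw [ENNReal.tsum_mul_left, tsum_ofReal_two_pow_rpow_neg]
        ring
    _ ≤ 2 * M := by gcongr

lemma le_mul_tsum_of_mul_two_pow_rpow_le {f : ℕ → ℝ≥0∞} {M : ℝ≥0∞} {a : ℝ} (ha : 0 < a)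
    (hf : ∀ j, M * ENNReal.ofReal (((2 : ℝ) ^ j) ^ (-a)) ≤ f j) :
    M ≤ ENNReal.ofReal a * ∑' j, f j := by
  have hpos : 0 < 1 - (2 : ℝ) ^ (-a) :=
    sub_pos.2 (Real.rpow_lt_one_of_one_lt_of_neg one_lt_two (neg_lt_zero.2 ha))
  calc M = ENNReal.ofReal (1 - 2 ^ (-a)) * (M * (ENNReal.ofReal (1 - 2 ^ (-a)))⁻¹) := by
        rw [mul_left_comm, ENNReal.mul_inv_cancel (by simpa using hpos) ENNReal.ofReal_ne_top,
          mul_one]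
    _ = ENNReal.ofReal (1 - 2 ^ (-a)) * ∑' j : ℕ, M * ENNReal.ofReal (((2 : ℝ) ^ j) ^ (-a)) := by
        rw [ENNReal.tsum_mul_left, tsum_ofReal_two_pow_rpow_neg]
    _ ≤ ENNReal.ofReal a * ∑' j, f j := by
        gcongr with j
        · exact one_sub_two_rpow_neg_le ha.le
        · exact hf j

end GeometricSeries

section TranslationDefect

variable {G : Type*} [AddGroup G] [MeasurableSpace G]

/-- The translation defect `h ↦ μ {x ∈ A | x + h ∉ A}`: the mass of `A` that a shift by `h`
moves out of `A`. Fractional perimeters are weighted integrals of it over `h`. -/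
noncomputable def translationDefect (μ : Measure G) (A : Set G) (h : G) : ℝ≥0∞ :=
  μ (A \ (· + h) ⁻¹' A)

variable {μ : Measure G} {A : Set G}

lemma translationDefect_le_measure (h : G) : translationDefect μ A h ≤ μ A :=
  measure_mono Set.sdiff_subset

lemma translationDefect_add_le [MeasurableAdd G] [μ.IsAddRightInvariant] (h k : G) :
    translationDefect μ A (h + k) ≤ translationDefect μ A h + translationDefect μ A k := by
  have hsubset : A \ (· + (h + k)) ⁻¹' A ⊆
      (A \ (· + h) ⁻¹' A) ∪ (· + h) ⁻¹' (A \ (· + k) ⁻¹' A) := by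
    rintro x ⟨hx, hxhk⟩
    by_cases hxh : x + h ∈ A
    · exact .inr ⟨hxh, by simpa only [Set.mem_preimage, add_assoc] using hxhk⟩
    · exact .inl ⟨hx, hxh⟩
  calc translationDefect μ A (h + k)
      ≤ translationDefect μ A h + μ ((· + h) ⁻¹' (A \ (· + k) ⁻¹' A)) :=
        (measure_mono hsubset).trans (measure_union_le _ _)
    _ = translationDefect μ A h + translationDefect μ A k := by
        rw [measure_preimage_add_right]; rfl

variable [MeasurableAdd₂ G] [SFinite μ]

lemma measurable_translationDefect (hA : MeasurableSet A) :
    Measurable (translationDefect μ A) :=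
  measurable_measure_prodMk_right (s := {p : G × G | p.1 ∈ A ∧ p.1 + p.2 ∉ A})
    ((measurable_fst hA).inter ((measurable_fst.add measurable_snd) hA.compl))

lemma lintegral_lintegral_compl_eq_lintegral_translationDefect_mul [MeasurableNeg G]
    [μ.IsAddLeftInvariant] (hA : MeasurableSet A) {k : G → ℝ≥0∞} (hk : Measurable k) :
    ∫⁻ x in A, ∫⁻ y in Aᶜ, k (-x + y) ∂μ ∂μ = ∫⁻ h, translationDefect μ A h * k h ∂μ := by
  have hshear := measurePreserving_prod_add μ μ
  have hS := hshear.measurable (hA.prod hA.compl)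
  have hdiff : Measurable fun p : G × G => k (-p.1 + p.2) :=
    hk.comp (measurable_fst.neg.add measurable_snd)
  calc ∫⁻ x in A, ∫⁻ y in Aᶜ, k (-x + y) ∂μ ∂μ
      = ∫⁻ p in A ×ˢ Aᶜ, k (-p.1 + p.2) ∂μ.prod μ :=
        (setLIntegral_prod _ hdiff.aemeasurable).symm
    _ = ∫⁻ p in (fun p : G × G => (p.1, p.1 + p.2)) ⁻¹' A ×ˢ Aᶜ, k p.2 ∂μ.prod μ := by
        rw [← hshear.setLIntegral_comp_preimage (hA.prod hA.compl) hdiff]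
        simp only [neg_add_cancel_left]
    _ = ∫⁻ h, ∫⁻ x, ((fun x : G => (x, x + h)) ⁻¹' A ×ˢ Aᶜ).indicator (fun _ => k h) x ∂μ ∂μ := by
        have hint : Measurable (Set.indicator _ fun p : G × G => k p.2) :=
          (hk.comp measurable_snd).indicator hS
        rw [← lintegral_indicator hS, lintegral_prod_symm' _ hint]
        rfl
    _ = ∫⁻ h, translationDefect μ A h * k h ∂μ := by
        exact lintegral_congr fun h =>
          (lintegral_indicator_const (measurable_prodMk_right hS) (k h)).trans (mul_comm _ _)

lemma lintegral_measure_inter_preimage_add_right [μ.IsAddLeftInvariant] (hA : MeasurableSet A) :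
    ∫⁻ h, μ (A ∩ (· + h) ⁻¹' A) ∂μ = μ A * μ A := by
  have hshear := measurePreserving_prod_add μ μ
  rw [← Measure.prod_prod, ← hshear.measure_preimage (hA.prod hA).nullMeasurableSet,
    Measure.prod_apply_symm (hshear.measurable (hA.prod hA))]
  rfl

lemma measure_mul_measure_le_setLIntegral_translationDefect_add [μ.IsAddLeftInvariant]
    (hA : MeasurableSet A) (D : Set G) :
    μ A * μ D ≤ ∫⁻ h in D, translationDefect μ A h ∂μ + μ A * μ A := by
  have hsplit (h : G) : μ A = translationDefect μ A h + μ (A ∩ (· + h) ⁻¹' A) := by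
    rw [add_comm]
    exact (measure_inter_add_sdiff A (measurable_add_const h hA)).symm
  calc μ A * μ D = ∫⁻ h in D, (translationDefect μ A h + μ (A ∩ (· + h) ⁻¹' A)) ∂μ := by
        simp_rw [← hsplit, setLIntegral_const]
    _ = ∫⁻ h in D, translationDefect μ A h ∂μ + ∫⁻ h in D, μ (A ∩ (· + h) ⁻¹' A) ∂μ :=
        lintegral_add_left (measurable_translationDefect hA) _
    _ ≤ ∫⁻ h in D, translationDefect μ A h ∂μ + μ A * μ A := by
        rw [← lintegral_measure_inter_preimage_add_right hA]
        gcongr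
        exact Measure.restrict_le_self

end TranslationDefect

section DyadicAnnulus

variable (E : Type*) [NormedAddCommGroup E]

/-- The spherical shell `R ≤ ‖h‖ < 2 R`; shells of consecutive dyadic radii tile `E \ {0}`. -/
def dyadicAnnulus (R : ℝ) : Set E := {h | ‖h‖ ∈ Set.Ico R (2 * R)}

variable {E}

lemma pairwise_disjoint_dyadicAnnulus {R : ℝ} (hR : 0 < R) :
    Pairwise (Function.onFun Disjoint fun j : ℕ => dyadicAnnulus E (R / 2 ^ j)) := by
  refine (symm_disjoint.comap _).pairwise_on _ |>.2 fun i j hij => ?_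
  have hradii : 2 * (R / 2 ^ j) ≤ R / 2 ^ i := by
    calc 2 * (R / 2 ^ j) ≤ 2 * (R / 2 ^ (i + 1)) := by
          gcongr
          · norm_num
          · exact hij
      _ = R / 2 ^ i := by rw [pow_succ]; field_simp
  exact Set.disjoint_left.2 fun h hi hj => (hj.2.trans_le (hradii.trans hi.1)).false

lemma mem_iUnion_dyadicAnnulus {R : ℝ} (hR : 0 < R) {h : E} (hh : h ≠ 0) :
    h ∈ (⋃ j : ℕ, dyadicAnnulus E (R / 2 ^ (j + 1))) ∪ ⋃ j : ℕ, dyadicAnnulus E (R * 2 ^ j) := by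
  obtain ⟨n, hn, hn'⟩ := exists_mem_Ico_zpow (div_pos (norm_pos_iff.2 hh) hR) one_lt_two
  rw [le_div_iff₀' hR] at hn
  rw [div_lt_iff₀' hR, zpow_add_one₀ two_ne_zero] at hn'
  cases n with
  | ofNat j =>
    simp only [Int.ofNat_eq_natCast, zpow_natCast] at hn hn'
    exact .inr (Set.mem_iUnion.2 ⟨j, hn, by linarith⟩)
  | negSucc j =>
    simp only [zpow_negSucc, ← div_eq_mul_inv] at hn hn'
    exact .inl (Set.mem_iUnion.2 ⟨j, hn, hn'.trans_eq (by ring)⟩)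

lemma smul_dyadicAnnulus [NormedSpace ℝ E] {c : ℝ} (hc : 0 < c) (R : ℝ) :
    c • dyadicAnnulus E R = dyadicAnnulus E (c * R) := by
  ext x
  simp only [Set.mem_smul_set_iff_inv_smul_mem₀ hc.ne', dyadicAnnulus, Set.mem_ofPred_eq,
    Set.mem_Ico, norm_smul, norm_inv, Real.norm_of_nonneg hc.le, le_inv_mul_iff₀ hc,
    inv_mul_lt_iff₀ hc, mul_left_comm]

variable [MeasurableSpace E] {μ : Measure E}

lemma measurableSet_dyadicAnnulus [BorelSpace E] (R : ℝ) : MeasurableSet (dyadicAnnulus E R) :=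
  measurable_norm measurableSet_Ico

lemma lintegral_le_tsum_dyadicAnnulus {g : E → ℝ≥0∞} (hg : g 0 = 0) {R : ℝ} (hR : 0 < R) :
    ∫⁻ h, g h ∂μ ≤ ∑' j : ℕ, ∫⁻ h in dyadicAnnulus E (R / 2 ^ (j + 1)), g h ∂μ +
      ∑' j : ℕ, ∫⁻ h in dyadicAnnulus E (R * 2 ^ j), g h ∂μ := by
  have hsupport : Function.support g ⊆ (⋃ j : ℕ, dyadicAnnulus E (R / 2 ^ (j + 1))) ∪
      ⋃ j : ℕ, dyadicAnnulus E (R * 2 ^ j) := fun h hh =>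
    mem_iUnion_dyadicAnnulus hR (by rintro rfl; exact hh hg)
  rw [← setLIntegral_eq_of_support_subset hsupport]
  exact (lintegral_union_le _ _ _).trans
    (add_le_add (lintegral_iUnion_le _ _) (lintegral_iUnion_le _ _))

variable [NormedSpace ℝ E]

lemma measure_dyadicAnnulus_pos [Nontrivial E] [μ.IsOpenPosMeasure] {R : ℝ} (hR : 0 < R) :
    0 < μ (dyadicAnnulus E R) := by
  obtain ⟨x, hx⟩ := exists_norm_eq E (show 0 ≤ 3 / 2 * R by positivity)
  have hopen : IsOpen {h : E | ‖h‖ ∈ Set.Ioo R (2 * R)} := isOpen_Ioo.preimage continuous_norm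
  refine (hopen.measure_pos μ ⟨x, ?_⟩).trans_le (measure_mono fun h hh => ⟨hh.1.le, hh.2⟩)
  rw [Set.mem_ofPred_eq, hx]
  constructor <;> linarith

variable [FiniteDimensional ℝ E] [μ.IsAddHaarMeasure]

lemma measure_dyadicAnnulus [BorelSpace E] {R : ℝ} (hR : 0 < R) :
    μ (dyadicAnnulus E R) = ENNReal.ofReal (R ^ finrank ℝ E) * μ (dyadicAnnulus E 1) := by
  rw [← Measure.addHaar_smul_of_nonneg μ hR.le, smul_dyadicAnnulus hR, mul_one]

lemma measure_dyadicAnnulus_lt_top (R : ℝ) : μ (dyadicAnnulus E R) < ∞ := by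
  have hsubset : dyadicAnnulus E R ⊆ Metric.ball 0 (2 * R) := fun h hh =>
    mem_ball_zero_iff.2 hh.2
  exact (measure_mono hsubset).trans_lt measure_ball_lt_top

end DyadicAnnulus

section FractionalPerimeter

variable {E : Type*} [NormedAddCommGroup E] [NormedSpace ℝ E]

/-- The kernel `|h|^{-(d+α)}` of the fractional `α`-perimeter in dimension `d = dim E`. For
`0 < α` its junk value at `h = 0` is `0`, not `∞`. -/
noncomputable def fracKernel (α : ℝ) (h : E) : ℝ≥0∞ :=
  ENNReal.ofReal (‖h‖ ^ (-((finrank ℝ E : ℝ) + α)))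

lemma fracKernel_zero {α : ℝ} (hα : 0 < α) : fracKernel α (0 : E) = 0 := by
  have hexp : -((finrank ℝ E : ℝ) + α) ≠ 0 := by
    rw [neg_ne_zero]
    positivity
  rw [fracKernel, norm_zero, Real.zero_rpow hexp, ENNReal.ofReal_zero]

lemma fracKernel_smul (α : ℝ) {c : ℝ} (hc : 0 < c) (h : E) :
    fracKernel α (c • h) = ENNReal.ofReal (c ^ (-((finrank ℝ E : ℝ) + α))) * fracKernel α h := by
  rw [fracKernel, norm_smul, Real.norm_of_nonneg hc.le, Real.mul_rpow hc.le (norm_nonneg _),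
    ENNReal.ofReal_mul (by positivity), fracKernel]

section

variable {ρ : ℝ} {h : E}

lemma fracKernel_le_of_mem_dyadicAnnulus {α : ℝ} (hα : 0 ≤ α) (hρ : 0 < ρ)
    (hh : h ∈ dyadicAnnulus E ρ) :
    fracKernel α h ≤ ENNReal.ofReal (ρ ^ (-((finrank ℝ E : ℝ) + α))) :=
  ENNReal.ofReal_le_ofReal <|
    Real.rpow_le_rpow_of_nonpos hρ hh.1 (neg_nonpos.2 (by positivity))

lemma one_le_mul_fracKernel_of_mem_dyadicAnnulus {α : ℝ} (hα : 0 ≤ α) (hρ : 0 < ρ)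
    (hh : h ∈ dyadicAnnulus E ρ) :
    1 ≤ ENNReal.ofReal ((2 * ρ) ^ ((finrank ℝ E : ℝ) + α)) * fracKernel α h := by
  have hpos : 0 < ‖h‖ := hρ.trans_le hh.1
  rw [fracKernel, ← ENNReal.ofReal_mul (by positivity), ENNReal.one_le_ofReal,
    Real.rpow_neg hpos.le, ← div_eq_mul_inv, one_le_div (by positivity)]
  exact Real.rpow_le_rpow hpos.le hh.2.le (by positivity)

lemma fracKernel_le_mul_fracKernel_of_mem_dyadicAnnulus {s t : ℝ} (hst : s ≤ t) (hρ : 0 < ρ)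
    (hh : h ∈ dyadicAnnulus E ρ) :
    fracKernel s h ≤ ENNReal.ofReal ((2 * ρ) ^ (t - s)) * fracKernel t h := by
  have hpos : 0 < ‖h‖ := hρ.trans_le hh.1
  rw [fracKernel, fracKernel, ← ENNReal.ofReal_mul (by positivity),
    show -((finrank ℝ E : ℝ) + s) = (t - s) + -((finrank ℝ E : ℝ) + t) by ring,
    Real.rpow_add hpos]
  gcongr
  exact hh.2.le

end

variable [MeasurableSpace E] {μ : Measure E} {A : Set E}

/-- The fractional `α`-perimeter of `A` with respect to `μ`, written as an integral over the
shift `h = y - x` between a point `x` of `A` and a point `y` of its complement. -/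
noncomputable def fractionalPerimeter (μ : Measure E) (α : ℝ) (A : Set E) : ℝ≥0∞ :=
  ∫⁻ h, translationDefect μ A h * fracKernel α h ∂μ

lemma fractionalPerimeter_le_tsum_dyadicAnnulus (A : Set E) {α R : ℝ} (hα : 0 < α) (hR : 0 < R) :
    fractionalPerimeter μ α A ≤
      ∑' j : ℕ, ∫⁻ h in dyadicAnnulus E (R / 2 ^ (j + 1)),
        translationDefect μ A h * fracKernel α h ∂μ +
      ∑' j : ℕ, ∫⁻ h in dyadicAnnulus E (R * 2 ^ j), translationDefect μ A h * fracKernel α h ∂μ :=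
  lintegral_le_tsum_dyadicAnnulus (by rw [fracKernel_zero hα, mul_zero]) hR

variable [BorelSpace E]

lemma measurable_fracKernel (α : ℝ) : Measurable (fracKernel α : E → ℝ≥0∞) :=
  (measurable_norm.pow_const _).ennreal_ofReal

variable [FiniteDimensional ℝ E] [μ.IsAddHaarMeasure]

lemma measurable_translationDefect_mul_fracKernel (hA : MeasurableSet A) (α : ℝ) :
    Measurable fun h => translationDefect μ A h * fracKernel α h :=
  (measurable_translationDefect hA).mul (measurable_fracKernel α)

lemma setLIntegral_smul_set {c : ℝ} (hc : 0 < c) (S : Set E) (f : E → ℝ≥0∞) :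
    ∫⁻ x in c • S, f x ∂μ = ENNReal.ofReal (c ^ finrank ℝ E) * ∫⁻ x in S, f (c • x) ∂μ := by
  have hemb := measurableEmbedding_const_smul₀ (α := E) hc.ne'
  have hpreimage : (c • ·) ⁻¹' (c • S) = S := Set.preimage_image_eq S hemb.injective
  have hmap : ∫⁻ x in S, f (c • x) ∂μ =
      ENNReal.ofReal (c ^ finrank ℝ E)⁻¹ * ∫⁻ x in c • S, f x ∂μ := by
    rw [← abs_of_pos (inv_pos.2 (pow_pos hc _)), ← smul_eq_mul, ← lintegral_smul_measure,
      ← Measure.restrict_smul, ← Measure.map_addHaar_smul μ hc.ne', hemb.restrict_map,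
      hemb.lintegral_map, hpreimage]
  rw [hmap, ← mul_assoc, ← ENNReal.ofReal_mul (by positivity),
    mul_inv_cancel₀ (pow_pos hc _).ne', ENNReal.ofReal_one, one_mul]

lemma translationDefect_smul {c : ℝ} (hc : 0 < c) (A : Set E) (h : E) :
    translationDefect μ (c • A) (c • h) =
      ENNReal.ofReal (c ^ finrank ℝ E) * translationDefect μ A h := by
  have hpreimage : (· + c • h) ⁻¹' (c • A) = c • (· + h) ⁻¹' A := by
    ext x
    simp only [Set.mem_preimage, Set.mem_smul_set_iff_inv_smul_mem₀ hc.ne', smul_add,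
      inv_smul_smul₀ hc.ne']
  rw [translationDefect, hpreimage, ← Set.smul_set_sdiff₀ hc.ne',
    Measure.addHaar_smul_of_nonneg μ hc.le, translationDefect]

lemma fractionalPerimeter_smul (α : ℝ) {c : ℝ} (hc : 0 < c) (A : Set E) :
    fractionalPerimeter μ α (c • A) =
      ENNReal.ofReal (c ^ ((finrank ℝ E : ℝ) - α)) * fractionalPerimeter μ α A := by
  have hfactor : c ^ finrank ℝ E * (c ^ finrank ℝ E * c ^ (-((finrank ℝ E : ℝ) + α))) =
      c ^ ((finrank ℝ E : ℝ) - α) := by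
    rw [← Real.rpow_natCast, ← Real.rpow_add hc, ← Real.rpow_add hc]
    ring_nf
  calc fractionalPerimeter μ α (c • A)
      = ENNReal.ofReal (c ^ finrank ℝ E) *
          ∫⁻ h, translationDefect μ (c • A) (c • h) * fracKernel α (c • h) ∂μ := by
        have hsubst := setLIntegral_smul_set (μ := μ) hc Set.univ
          fun h => translationDefect μ (c • A) h * fracKernel α h
        rwa [Set.smul_set_univ₀ hc.ne', setLIntegral_univ, setLIntegral_univ] at hsubst
    _ = ENNReal.ofReal (c ^ finrank ℝ E) * ∫⁻ h, ENNReal.ofReal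
          (c ^ finrank ℝ E * c ^ (-((finrank ℝ E : ℝ) + α))) *
            (translationDefect μ A h * fracKernel α h) ∂μ := by
        congr 1
        refine lintegral_congr fun h => ?_
        rw [translationDefect_smul hc, fracKernel_smul α hc, ENNReal.ofReal_mul (by positivity)]
        ring
    _ = ENNReal.ofReal (c ^ ((finrank ℝ E : ℝ) - α)) * fractionalPerimeter μ α A := by
        rw [lintegral_const_mul' _ _ ENNReal.ofReal_ne_top, ← mul_assoc,
          ← ENNReal.ofReal_mul (by positivity), hfactor, fractionalPerimeter]

lemma setLIntegral_dyadicAnnulus_mul_fracKernel_le {f : E → ℝ≥0∞} {M : ℝ≥0∞} {α ρ : ℝ}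
    (hα : 0 ≤ α) (hρ : 0 < ρ) (hf : ∀ h ∈ dyadicAnnulus E ρ, f h ≤ M) :
    ∫⁻ h in dyadicAnnulus E ρ, f h * fracKernel α h ∂μ ≤
      M * μ (dyadicAnnulus E 1) * ENNReal.ofReal (ρ ^ (-α)) := by
  have hfactor : ρ ^ (-((finrank ℝ E : ℝ) + α)) * ρ ^ finrank ℝ E = ρ ^ (-α) := by
    rw [← Real.rpow_natCast, ← Real.rpow_add hρ]
    ring_nf
  calc ∫⁻ h in dyadicAnnulus E ρ, f h * fracKernel α h ∂μ
      ≤ ∫⁻ _ in dyadicAnnulus E ρ, M * ENNReal.ofReal (ρ ^ (-((finrank ℝ E : ℝ) + α))) ∂μ :=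
        setLIntegral_mono' (measurableSet_dyadicAnnulus ρ) fun h hh =>
          mul_le_mul' (hf h hh) (fracKernel_le_of_mem_dyadicAnnulus hα hρ hh)
    _ = M * μ (dyadicAnnulus E 1) * ENNReal.ofReal (ρ ^ (-α)) := by
        rw [setLIntegral_const, measure_dyadicAnnulus hρ, ← hfactor,
          ENNReal.ofReal_mul (by positivity)]
        ring

lemma setLIntegral_dyadicAnnulus_two_mul_le (hA : MeasurableSet A) (t R : ℝ) :
    ∫⁻ h in dyadicAnnulus E (2 * R), translationDefect μ A h * fracKernel t h ∂μ ≤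
      ENNReal.ofReal (2 ^ (1 - t)) *
        ∫⁻ h in dyadicAnnulus E R, translationDefect μ A h * fracKernel t h ∂μ := by
  have hdouble (h : E) : translationDefect μ A ((2 : ℝ) • h) ≤ 2 * translationDefect μ A h := by
    rw [two_smul, two_mul]
    exact translationDefect_add_le h h
  have hfactor : ENNReal.ofReal (2 ^ finrank ℝ E) *
      (2 * ENNReal.ofReal (2 ^ (-((finrank ℝ E : ℝ) + t)))) = ENNReal.ofReal (2 ^ (1 - t)) := by
    rw [← ENNReal.ofReal_ofNat 2, ← ENNReal.ofReal_mul two_pos.le,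
      ← ENNReal.ofReal_mul (by positivity), ← Real.rpow_natCast]
    nth_rw 2 [← Real.rpow_one 2]
    rw [← Real.rpow_add two_pos, ← Real.rpow_add two_pos]
    ring_nf
  rw [← smul_dyadicAnnulus two_pos, setLIntegral_smul_set two_pos, ← hfactor, mul_assoc,
    ← lintegral_const_mul _ (measurable_translationDefect_mul_fracKernel hA t)]
  refine mul_le_mul_right (lintegral_mono fun h => ?_) _
  calc translationDefect μ A ((2 : ℝ) • h) * fracKernel t ((2 : ℝ) • h)
      ≤ 2 * translationDefect μ A h *
          (ENNReal.ofReal (2 ^ (-((finrank ℝ E : ℝ) + t))) * fracKernel t h) :=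
        mul_le_mul' (hdouble h) (fracKernel_smul t two_pos h).le
    _ = 2 * ENNReal.ofReal (2 ^ (-((finrank ℝ E : ℝ) + t))) *
          (translationDefect μ A h * fracKernel t h) := by ring

lemma setLIntegral_dyadicAnnulus_mul_rpow_le (hA : MeasurableSet A) (t R : ℝ) (j : ℕ) :
    (∫⁻ h in dyadicAnnulus E R, translationDefect μ A h * fracKernel t h ∂μ) *
        ENNReal.ofReal (((2 : ℝ) ^ j) ^ (-(1 - t))) ≤
      ∫⁻ h in dyadicAnnulus E (R / 2 ^ j), translationDefect μ A h * fracKernel t h ∂μ := by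
  induction j with
  | zero => simp
  | succ j ih =>
    have hfactor : ((2 : ℝ) ^ (j + 1)) ^ (-(1 - t)) * 2 ^ (1 - t) =
        ((2 : ℝ) ^ j) ^ (-(1 - t)) := by
      rw [pow_succ, Real.mul_rpow (by positivity) two_pos.le, mul_assoc, ← Real.rpow_add two_pos,
        neg_add_cancel, Real.rpow_zero, mul_one]
    have hstep := setLIntegral_dyadicAnnulus_two_mul_le (μ := μ) hA t (R / 2 ^ (j + 1))
    rw [show 2 * (R / 2 ^ (j + 1)) = R / 2 ^ j by rw [pow_succ]; field_simp] at hstep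
    have hpow_ne_zero : ENNReal.ofReal ((2 : ℝ) ^ (1 - t)) ≠ 0 := by
      simpa using Real.rpow_pos_of_pos two_pos _
    rw [← ENNReal.mul_le_mul_iff_right hpow_ne_zero ENNReal.ofReal_ne_top]
    refine le_trans (le_of_eq ?_) (ih.trans hstep)
    rw [← hfactor, ENNReal.ofReal_mul (by positivity)]
    ring

/- Since the defect at most doubles with the shift, each shell inside `R` carries at least
`2 ^ (-(1 - t))` times its outer neighbour; summing this series is what produces `1 - t`. -/
lemma setLIntegral_dyadicAnnulus_le_fractionalPerimeter (hA : MeasurableSet A) {t R : ℝ}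
    (ht : t < 1) (hR : 0 < R) :
    ∫⁻ h in dyadicAnnulus E R, translationDefect μ A h * fracKernel t h ∂μ ≤
      ENNReal.ofReal (1 - t) * fractionalPerimeter μ t A := by
  refine (le_mul_tsum_of_mul_two_pow_rpow_le (sub_pos.2 ht)
    (setLIntegral_dyadicAnnulus_mul_rpow_le hA t R)).trans ?_
  gcongr
  rw [← lintegral_iUnion (fun j => measurableSet_dyadicAnnulus _)
    (pairwise_disjoint_dyadicAnnulus hR)]
  exact setLIntegral_le_lintegral _ _

lemma ofReal_mul_tsum_dyadicAnnulus_two_pow_le {α R : ℝ} (hα : 0 < α) (hα1 : α ≤ 1) (hR : 0 < R)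
    (A : Set E) :
    ENNReal.ofReal α *
        ∑' j : ℕ, ∫⁻ h in dyadicAnnulus E (R * 2 ^ j), translationDefect μ A h * fracKernel α h ∂μ ≤
      2 * (μ A * μ (dyadicAnnulus E 1) * ENNReal.ofReal (R ^ (-α))) := by
  refine mul_tsum_le_of_le_mul_two_pow_rpow hα hα1 fun j => ?_
  rw [mul_assoc, ← ENNReal.ofReal_mul (by positivity), ← Real.mul_rpow hR.le (by positivity)]
  exact setLIntegral_dyadicAnnulus_mul_fracKernel_le hα.le (by positivity) fun h _ =>
    translationDefect_le_measure h

lemma ofReal_mul_tsum_dyadicAnnulus_div_two_pow_le (hA : MeasurableSet A) {s t R : ℝ}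
    (hst : s < t) (hts : t - s ≤ 1) (ht : t < 1) (hR : 0 < R) :
    ENNReal.ofReal (t - s) * ∑' j : ℕ, ∫⁻ h in dyadicAnnulus E (R / 2 ^ (j + 1)),
        translationDefect μ A h * fracKernel s h ∂μ ≤
      2 * (ENNReal.ofReal (R ^ (t - s)) *
        (ENNReal.ofReal (1 - t) * fractionalPerimeter μ t A)) := by
  refine mul_tsum_le_of_le_mul_two_pow_rpow (sub_pos.2 hst) hts fun j => ?_
  have hradius : (2 * (R / 2 ^ (j + 1))) ^ (t - s) = R ^ (t - s) * (2 ^ j) ^ (-(t - s)) := by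
    rw [Real.rpow_neg (by positivity), ← div_eq_mul_inv, ← Real.div_rpow hR.le (by positivity),
      pow_succ]
    congr 1
    field_simp
  calc ∫⁻ h in dyadicAnnulus E (R / 2 ^ (j + 1)), translationDefect μ A h * fracKernel s h ∂μ
      ≤ ∫⁻ h in dyadicAnnulus E (R / 2 ^ (j + 1)),
          ENNReal.ofReal ((2 * (R / 2 ^ (j + 1))) ^ (t - s)) *
            (translationDefect μ A h * fracKernel t h) ∂μ := by
        refine setLIntegral_mono' (measurableSet_dyadicAnnulus _) fun h hh => ?_
        rw [mul_left_comm]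
        gcongr
        exact fracKernel_le_mul_fracKernel_of_mem_dyadicAnnulus hst.le (by positivity) hh
    _ ≤ ENNReal.ofReal ((2 * (R / 2 ^ (j + 1))) ^ (t - s)) *
          (ENNReal.ofReal (1 - t) * fractionalPerimeter μ t A) := by
        rw [lintegral_const_mul _ (measurable_translationDefect_mul_fracKernel hA t)]
        gcongr
        exact setLIntegral_dyadicAnnulus_le_fractionalPerimeter hA ht (by positivity)
    _ = ENNReal.ofReal (R ^ (t - s)) * (ENNReal.ofReal (1 - t) * fractionalPerimeter μ t A) *
          ENNReal.ofReal ((2 ^ j) ^ (-(t - s))) := by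
        rw [hradius, ENNReal.ofReal_mul (by positivity)]
        ring

lemma ofReal_mul_fractionalPerimeter_le (hA : MeasurableSet A) {s t : ℝ}
    (hs : 0 < s) (hst : s < t) (ht : t < 1) :
    ENNReal.ofReal ((t - s) * s) * fractionalPerimeter μ s A ≤
      2 * (ENNReal.ofReal (1 - t) * fractionalPerimeter μ t A) +
        2 * (μ A * μ (dyadicAnnulus E 1)) := by
  have hnear := ofReal_mul_tsum_dyadicAnnulus_div_two_pow_le (μ := μ) hA hst (by linarith) ht
    one_pos
  have hfar := ofReal_mul_tsum_dyadicAnnulus_two_pow_le (μ := μ) hs (by linarith) one_pos A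
  rw [Real.one_rpow, ENNReal.ofReal_one] at hnear hfar
  rw [one_mul] at hnear
  rw [mul_one] at hfar
  calc ENNReal.ofReal ((t - s) * s) * fractionalPerimeter μ s A
      ≤ ENNReal.ofReal ((t - s) * s) * _ + ENNReal.ofReal ((t - s) * s) * _ :=
        (mul_le_mul_right (fractionalPerimeter_le_tsum_dyadicAnnulus A hs one_pos) _).trans_eq
          (mul_add _ _ _)
    _ ≤ ENNReal.ofReal (t - s) * _ + ENNReal.ofReal s * _ := by
        gcongr <;> nlinarith
    _ ≤ _ := add_le_add hnear hfar

lemma setLIntegral_translationDefect_dyadicAnnulus_le (hA : MeasurableSet A) {t R : ℝ}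
    (ht0 : 0 ≤ t) (ht : t < 1) (hR : 0 < R) :
    ∫⁻ h in dyadicAnnulus E R, translationDefect μ A h ∂μ ≤
      ENNReal.ofReal ((2 * R) ^ ((finrank ℝ E : ℝ) + t)) *
        (ENNReal.ofReal (1 - t) * fractionalPerimeter μ t A) := by
  refine le_trans ?_ (mul_le_mul_right
    (setLIntegral_dyadicAnnulus_le_fractionalPerimeter hA ht hR) _)
  rw [← lintegral_const_mul _ (measurable_translationDefect_mul_fracKernel hA t)]
  refine setLIntegral_mono' (measurableSet_dyadicAnnulus R) fun h hh => ?_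
  rw [mul_left_comm]
  exact le_mul_of_one_le_right' (one_le_mul_fracKernel_of_mem_dyadicAnnulus ht0 hR hh)

lemma measure_mul_measure_dyadicAnnulus_le (hA : MeasurableSet A) (hAtop : μ A ≠ ∞) {t R : ℝ}
    (ht0 : 0 ≤ t) (ht : t < 1) (hR : 0 < R) (hAR : 2 * μ A ≤ μ (dyadicAnnulus E R)) :
    μ A * μ (dyadicAnnulus E R) ≤ 2 * (ENNReal.ofReal ((2 * R) ^ ((finrank ℝ E : ℝ) + t)) *
      (ENNReal.ofReal (1 - t) * fractionalPerimeter μ t A)) := by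
  have habsorb : μ A * μ (dyadicAnnulus E R) + μ A * μ (dyadicAnnulus E R) ≤
      2 * ∫⁻ h in dyadicAnnulus E R, translationDefect μ A h ∂μ +
        μ A * μ (dyadicAnnulus E R) := by
    calc μ A * μ (dyadicAnnulus E R) + μ A * μ (dyadicAnnulus E R)
        = 2 * (μ A * μ (dyadicAnnulus E R)) := (two_mul _).symm
      _ ≤ 2 * (∫⁻ h in dyadicAnnulus E R, translationDefect μ A h ∂μ + μ A * μ A) := by
          gcongr
          exact measure_mul_measure_le_setLIntegral_translationDefect_add hA _
      _ = 2 * ∫⁻ h in dyadicAnnulus E R, translationDefect μ A h ∂μ + μ A * (2 * μ A) := by ring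
      _ ≤ _ := by gcongr
  refine ((ENNReal.add_le_add_iff_right ?_).1 habsorb).trans ?_
  · exact ENNReal.mul_ne_top hAtop (measure_dyadicAnnulus_lt_top R).ne
  · gcongr
    exact setLIntegral_translationDefect_dyadicAnnulus_le hA ht0 ht hR

lemma translationDefect_unitBall_le_of_norm_lt_one {h : E} (hh : ‖h‖ < 1) :
    translationDefect μ (Metric.ball 0 1) h ≤
      ENNReal.ofReal (finrank ℝ E * ‖h‖) * μ (Metric.ball 0 1) := by
  have hsubset : Metric.ball (0 : E) 1 \ (· + h) ⁻¹' Metric.ball 0 1 ⊆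
      Metric.ball 0 1 \ Metric.ball 0 (1 - ‖h‖) := by
    refine Set.sdiff_subset_sdiff_right fun x hx => ?_
    rw [mem_ball_zero_iff] at hx
    exact mem_ball_zero_iff.2 ((norm_add_le x h).trans_lt (by linarith))
  have hball : μ (Metric.ball (0 : E) (1 - ‖h‖)) =
      ENNReal.ofReal ((1 - ‖h‖) ^ finrank ℝ E) * μ (Metric.ball 0 1) :=
    Measure.addHaar_ball_of_pos μ 0 (sub_pos.2 hh)
  have bernoulli : 1 + finrank ℝ E * -‖h‖ ≤ (1 + -‖h‖) ^ finrank ℝ E :=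
    one_add_mul_le_pow (by linarith) _
  refine (measure_mono hsubset).trans ?_
  rw [measure_sdiff (Metric.ball_subset_ball (sub_le_self _ (norm_nonneg h)))
    measurableSet_ball.nullMeasurableSet measure_ball_lt_top.ne, tsub_le_iff_left, hball,
    ← add_mul, ← ENNReal.ofReal_add (pow_nonneg (sub_nonneg.2 hh.le) _) (by positivity)]
  refine le_mul_of_one_le_left' (ENNReal.one_le_ofReal.2 ?_)
  rw [sub_eq_add_neg]
  linarith

lemma ofReal_mul_tsum_dyadicAnnulus_unitBall_le {t : ℝ} (ht0 : 0 ≤ t) (ht : t < 1) :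
    ENNReal.ofReal (1 - t) * ∑' j : ℕ, ∫⁻ h in dyadicAnnulus E (1 / 2 ^ (j + 1)),
        translationDefect μ (Metric.ball 0 1) h * fracKernel t h ∂μ ≤
      2 * (ENNReal.ofReal (2 * finrank ℝ E) *
        (μ (Metric.ball 0 1) * μ (dyadicAnnulus E 1))) := by
  refine mul_tsum_le_of_le_mul_two_pow_rpow (sub_pos.2 ht) (by linarith) fun j => ?_
  have hradius : 2 * (1 / 2 ^ (j + 1)) = ((2 : ℝ) ^ j)⁻¹ := by
    rw [pow_succ]
    field_simp
  have hdefect : ∀ h ∈ dyadicAnnulus E (1 / 2 ^ (j + 1)), translationDefect μ (Metric.ball 0 1) h ≤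
      ENNReal.ofReal (finrank ℝ E * ((2 : ℝ) ^ j)⁻¹) * μ (Metric.ball 0 1) := by
    intro h hh
    have hnorm : ‖h‖ < ((2 : ℝ) ^ j)⁻¹ := hradius ▸ hh.2
    have hone : ((2 : ℝ) ^ j)⁻¹ ≤ 1 := inv_le_one_of_one_le₀ (one_le_pow₀ one_le_two)
    exact (translationDefect_unitBall_le_of_norm_lt_one (hnorm.trans_le hone)).trans (by gcongr)
  have hfactor : finrank ℝ E * ((2 : ℝ) ^ j)⁻¹ * (1 / 2 ^ (j + 1)) ^ (-t) ≤
      2 * finrank ℝ E * (2 ^ j) ^ (-(1 - t)) := by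
    calc finrank ℝ E * ((2 : ℝ) ^ j)⁻¹ * (1 / 2 ^ (j + 1)) ^ (-t)
        ≤ finrank ℝ E * (2 * (2 ^ j) ^ (-(1 - t))) := by
          rw [mul_assoc]
          exact mul_le_mul_of_nonneg_left (inv_two_pow_mul_rpow_neg_le ht.le j) (by positivity)
      _ = 2 * finrank ℝ E * (2 ^ j) ^ (-(1 - t)) := by ring
  calc _ ≤ ENNReal.ofReal (finrank ℝ E * ((2 : ℝ) ^ j)⁻¹) * μ (Metric.ball 0 1) *
          μ (dyadicAnnulus E 1) * ENNReal.ofReal ((1 / 2 ^ (j + 1)) ^ (-t)) :=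
        setLIntegral_dyadicAnnulus_mul_fracKernel_le ht0 (by positivity) hdefect
    _ = ENNReal.ofReal (finrank ℝ E * ((2 : ℝ) ^ j)⁻¹ * (1 / 2 ^ (j + 1)) ^ (-t)) *
          (μ (Metric.ball 0 1) * μ (dyadicAnnulus E 1)) := by
        rw [ENNReal.ofReal_mul (by positivity : 0 ≤ finrank ℝ E * ((2 : ℝ) ^ j)⁻¹)]
        ring
    _ ≤ ENNReal.ofReal (2 * finrank ℝ E * (2 ^ j) ^ (-(1 - t))) *
          (μ (Metric.ball 0 1) * μ (dyadicAnnulus E 1)) := by gcongr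
    _ = _ := by
        rw [ENNReal.ofReal_mul (by positivity)]
        ring

lemma ofReal_mul_fractionalPerimeter_unitBall_le {t : ℝ} (ht0 : 0 < t) (ht : t < 1) :
    ENNReal.ofReal (t * (1 - t)) * fractionalPerimeter μ t (Metric.ball (0 : E) 1) ≤
      (4 * finrank ℝ E + 2) * (μ (Metric.ball 0 1) * μ (dyadicAnnulus E 1)) := by
  have hnear := ofReal_mul_tsum_dyadicAnnulus_unitBall_le (E := E) (μ := μ) ht0.le ht
  have hfar := ofReal_mul_tsum_dyadicAnnulus_two_pow_le (μ := μ) ht0 ht.le one_pos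
    (Metric.ball (0 : E) 1)
  rw [Real.one_rpow, ENNReal.ofReal_one, mul_one] at hfar
  calc ENNReal.ofReal (t * (1 - t)) * fractionalPerimeter μ t (Metric.ball (0 : E) 1)
      ≤ ENNReal.ofReal (t * (1 - t)) * _ + ENNReal.ofReal (t * (1 - t)) * _ :=
        (mul_le_mul_right (fractionalPerimeter_le_tsum_dyadicAnnulus _ ht0 one_pos) _).trans_eq
          (mul_add _ _ _)
    _ ≤ ENNReal.ofReal (1 - t) * _ + ENNReal.ofReal t * _ := by
        gcongr <;> nlinarith
    _ ≤ _ := add_le_add hnear hfar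
    _ = _ := by
        rw [ENNReal.ofReal_mul two_pos.le, ENNReal.ofReal_natCast, ENNReal.ofReal_ofNat]
        ring

lemma fractionalPerimeter_ne_top_of_lt (hA : MeasurableSet A) (hAtop : μ A ≠ ∞) {s t : ℝ}
    (hs : 0 < s) (hst : s < t) (ht : t < 1) (hP : fractionalPerimeter μ t A ≠ ∞) :
    fractionalPerimeter μ s A ≠ ∞ := by
  have hvtop := (measure_dyadicAnnulus_lt_top (E := E) (μ := μ) 1).ne
  have hbound := ofReal_mul_fractionalPerimeter_le (μ := μ) hA hs hst ht
  have hcoeff : ENNReal.ofReal ((t - s) * s) ≠ 0 := by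
    simpa using mul_pos (sub_pos.2 hst) hs
  exact (ENNReal.lt_top_of_mul_ne_top_right (ne_top_of_le_ne_top (by finiteness) hbound) hcoeff).ne

variable [Nontrivial E]

lemma measure_rpow_mul_fractionalPerimeter_smul {α : ℝ} (hα : α ≤ 1) {c : ℝ} (hc : 0 < c)
    (A : Set E) :
    μ A ^ (1 - α / finrank ℝ E) * fractionalPerimeter μ α (c • A) =
      μ (c • A) ^ (1 - α / finrank ℝ E) * fractionalPerimeter μ α A := by
  have hdim : (1 : ℝ) ≤ finrank ℝ E := mod_cast Module.finrank_pos (R := ℝ) (M := E)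
  have hexp : 0 ≤ 1 - α / finrank ℝ E :=
    sub_nonneg.2 ((div_le_one₀ (by positivity)).2 (hα.trans hdim))
  have hfactor : ENNReal.ofReal (c ^ finrank ℝ E) ^ (1 - α / finrank ℝ E) =
      ENNReal.ofReal (c ^ ((finrank ℝ E : ℝ) - α)) := by
    rw [ENNReal.ofReal_rpow_of_pos (by positivity), ← Real.rpow_natCast, ← Real.rpow_mul hc.le]
    congr 2
    field_simp
  rw [fractionalPerimeter_smul α hc, Measure.addHaar_smul_of_nonneg μ hc.le,
    ENNReal.mul_rpow_of_nonneg _ _ hexp, hfactor]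
  ring

lemma exists_smul_measure_eq (hA0 : μ A ≠ 0) (hAtop : μ A ≠ ∞) {V : ℝ≥0∞} (hV0 : V ≠ 0)
    (hVtop : V ≠ ∞) : ∃ c : ℝ, 0 < c ∧ μ (c • A) = V := by
  have hVA : V / μ A ≠ ∞ := ENNReal.div_ne_top hVtop hA0
  have hpos : 0 < (V / μ A).toReal := ENNReal.toReal_pos (ENNReal.div_ne_zero.2 ⟨hV0, hAtop⟩) hVA
  refine ⟨(V / μ A).toReal ^ ((finrank ℝ E : ℝ)⁻¹), by positivity, ?_⟩
  rw [Measure.addHaar_smul_of_nonneg μ (by positivity),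
    Real.rpow_inv_natCast_pow hpos.le Module.finrank_pos.ne', ENNReal.ofReal_toReal hVA,
    ENNReal.div_mul_cancel hA0 hAtop]

lemma exists_smul_measure_eq_one_and_fractionalPerimeter (hA0 : μ A ≠ 0) (hAtop : μ A ≠ ∞) :
    ∃ c : ℝ, μ (c • A) = 1 ∧ ∀ α ≤ 1, fractionalPerimeter μ α A =
      μ A ^ (1 - α / finrank ℝ E) * fractionalPerimeter μ α (c • A) := by
  obtain ⟨c, hc, hcA⟩ := exists_smul_measure_eq hA0 hAtop one_ne_zero one_ne_top
  refine ⟨c, hcA, fun α hα => ?_⟩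
  rw [measure_rpow_mul_fractionalPerimeter_smul hα hc, hcA, ENNReal.one_rpow, one_mul]

variable (μ)

lemma exists_two_le_measure_dyadicAnnulus : ∃ R : ℝ, 1 ≤ R ∧ 2 ≤ μ (dyadicAnnulus E R) := by
  have hv0 := (measure_dyadicAnnulus_pos (E := E) (μ := μ) one_pos).ne'
  have hvtop := (measure_dyadicAnnulus_lt_top (E := E) (μ := μ) 1).ne
  set R := max 1 (2 / μ (dyadicAnnulus E 1)).toReal
  have hR : 1 ≤ R := le_max_left _ _
  refine ⟨R, hR, ?_⟩
  calc 2 = 2 / μ (dyadicAnnulus E 1) * μ (dyadicAnnulus E 1) :=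
        (ENNReal.div_mul_cancel hv0 hvtop).symm
    _ ≤ ENNReal.ofReal (R ^ finrank ℝ E) * μ (dyadicAnnulus E 1) := by
        gcongr
        rw [← ENNReal.ofReal_toReal (ENNReal.div_ne_top ENNReal.ofNat_ne_top hv0)]
        gcongr
        exact (le_max_right _ _).trans (le_self_pow₀ hR Module.finrank_pos.ne')
    _ = μ (dyadicAnnulus E R) := (measure_dyadicAnnulus (by positivity)).symm

lemma exists_one_le_mul_fractionalPerimeter : ∃ C : ℝ≥0, ∀ (A : Set E) (t : ℝ), MeasurableSet A →
    0 ≤ t → t < 1 → μ A = 1 → 1 ≤ C * (ENNReal.ofReal (1 - t) * fractionalPerimeter μ t A) := by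
  obtain ⟨R, hR, hμR⟩ := exists_two_le_measure_dyadicAnnulus μ
  refine ⟨((2 * R) ^ ((finrank ℝ E : ℝ) + 1)).toNNReal, fun A t hA ht0 ht hA1 => ?_⟩
  have hiso := measure_mul_measure_dyadicAnnulus_le hA (by simp [hA1]) ht0 ht (by linarith)
    (hμR.trans_eq' (by rw [hA1, mul_one]))
  rw [hA1, one_mul] at hiso
  have hone := (ENNReal.mul_le_mul_iff_right two_ne_zero ENNReal.ofNat_ne_top).1
    ((mul_one (2 : ℝ≥0∞)).trans_le (hμR.trans hiso))
  refine hone.trans ?_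
  change _ ≤ ENNReal.ofReal _ * _
  gcongr
  linarith

theorem exists_fractional_isoperimetric : ∃ C : ℝ≥0, ∀ (A : Set E) (t : ℝ), MeasurableSet A →
    0 ≤ t → t < 1 → μ A ≠ 0 → μ A ≠ ∞ →
    μ A ^ (1 - t / finrank ℝ E) ≤ C * (ENNReal.ofReal (1 - t) * fractionalPerimeter μ t A) := by
  obtain ⟨C, hC⟩ := exists_one_le_mul_fractionalPerimeter (E := E) μ
  refine ⟨C, fun A t hA ht0 ht hA0 hAtop => ?_⟩
  obtain ⟨c, hcA, hP⟩ := exists_smul_measure_eq_one_and_fractionalPerimeter hA0 hAtop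
  calc μ A ^ (1 - t / finrank ℝ E)
      ≤ μ A ^ (1 - t / finrank ℝ E) *
          (C * (ENNReal.ofReal (1 - t) * fractionalPerimeter μ t (c • A))) :=
        le_mul_of_one_le_right' (hC _ t (hA.const_smul₀ c) ht0 ht hcA)
    _ = C * (ENNReal.ofReal (1 - t) * fractionalPerimeter μ t A) := by
        rw [hP t ht.le]
        ring

theorem exists_fractionalPerimeter_interpolation : ∃ C : ℝ≥0, ∀ (A : Set E) (s t : ℝ),
    MeasurableSet A → 0 < s → s < t → t < 1 → μ A ≠ 0 → μ A ≠ ∞ →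
    ENNReal.ofReal ((t - s) * s) * fractionalPerimeter μ s A ≤
      C * μ A ^ ((t - s) / finrank ℝ E) * (ENNReal.ofReal (1 - t) * fractionalPerimeter μ t A) := by
  obtain ⟨C, hC⟩ := exists_one_le_mul_fractionalPerimeter (E := E) μ
  lift μ (dyadicAnnulus E 1) to ℝ≥0 using (measure_dyadicAnnulus_lt_top 1).ne with v hv
  refine ⟨2 + 2 * v * C, fun A s t hA hs hst ht hA0 hAtop => ?_⟩
  obtain ⟨c, hcA, hP⟩ := exists_smul_measure_eq_one_and_fractionalPerimeter hA0 hAtop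
  have hunit : ENNReal.ofReal ((t - s) * s) * fractionalPerimeter μ s (c • A) ≤
      (2 + 2 * v * C) * (ENNReal.ofReal (1 - t) * fractionalPerimeter μ t (c • A)) := by
    calc _ ≤ 2 * (ENNReal.ofReal (1 - t) * fractionalPerimeter μ t (c • A)) + 2 * (v * 1) := by
          rw [hv, mul_one, ← one_mul (μ (dyadicAnnulus E 1)), ← hcA]
          exact ofReal_mul_fractionalPerimeter_le (hA.const_smul₀ c) hs hst ht
      _ ≤ 2 * (ENNReal.ofReal (1 - t) * fractionalPerimeter μ t (c • A)) +
          2 * (v * (C * (ENNReal.ofReal (1 - t) * fractionalPerimeter μ t (c • A)))) := by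
          gcongr
          exact hC _ t (hA.const_smul₀ c) (hs.trans hst).le ht hcA
      _ = _ := by ring
  have hexp : μ A ^ (1 - s / finrank ℝ E) =
      μ A ^ ((t - s) / finrank ℝ E) * μ A ^ (1 - t / finrank ℝ E) := by
    rw [← ENNReal.rpow_add _ _ hA0 hAtop]
    ring_nf
  calc ENNReal.ofReal ((t - s) * s) * fractionalPerimeter μ s A
      = μ A ^ (1 - s / finrank ℝ E) *
          (ENNReal.ofReal ((t - s) * s) * fractionalPerimeter μ s (c • A)) := by
        rw [hP s (hst.trans ht).le]
        ring
    _ ≤ μ A ^ (1 - s / finrank ℝ E) *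
          ((2 + 2 * v * C) * (ENNReal.ofReal (1 - t) * fractionalPerimeter μ t (c • A))) := by
        gcongr
    _ = _ := by
        rw [hexp, hP t ht.le]
        push_cast
        ring

variable {μ} in
lemma ofReal_mul_fractionalPerimeter_ball_le {r t : ℝ} (hr : 0 < r) (ht0 : 0 < t) (ht : t < 1) :
    ENNReal.ofReal (t * (1 - t)) * fractionalPerimeter μ t (Metric.ball (0 : E) r) ≤
      (4 * finrank ℝ E + 2) *
        (μ (Metric.ball (0 : E) 1) ^ (t / finrank ℝ E) * μ (dyadicAnnulus E 1)) *
        μ (Metric.ball (0 : E) r) ^ (1 - t / finrank ℝ E) := by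
  set B := Metric.ball (0 : E) 1
  have hB0 : 0 < μ B := Metric.measure_ball_pos μ 0 one_pos
  have hBtop : μ B ≠ ∞ := measure_ball_lt_top.ne
  have hsplit : μ B = μ B ^ (1 - t / finrank ℝ E) * μ B ^ (t / finrank ℝ E) := by
    rw [← ENNReal.rpow_add _ _ hB0.ne' hBtop, sub_add_cancel, ENNReal.rpow_one]
  have hscale : μ B ^ (1 - t / finrank ℝ E) * fractionalPerimeter μ t (Metric.ball (0 : E) r) =
      μ (Metric.ball (0 : E) r) ^ (1 - t / finrank ℝ E) * fractionalPerimeter μ t B := by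
    rw [← smul_unitBall_of_pos hr]
    exact measure_rpow_mul_fractionalPerimeter_smul ht.le hr B
  rw [← ENNReal.mul_le_mul_iff_right (ENNReal.rpow_pos hB0 hBtop).ne'
    (ENNReal.rpow_ne_top_of_ne_zero hB0.ne' hBtop)]
  calc μ B ^ (1 - t / finrank ℝ E) *
        (ENNReal.ofReal (t * (1 - t)) * fractionalPerimeter μ t (Metric.ball (0 : E) r))
      = μ (Metric.ball (0 : E) r) ^ (1 - t / finrank ℝ E) *
          (ENNReal.ofReal (t * (1 - t)) * fractionalPerimeter μ t B) := by
        rw [mul_left_comm, hscale, mul_left_comm]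
    _ ≤ μ (Metric.ball (0 : E) r) ^ (1 - t / finrank ℝ E) *
          ((4 * finrank ℝ E + 2) * (μ B * μ (dyadicAnnulus E 1))) :=
        mul_le_mul_right (ofReal_mul_fractionalPerimeter_unitBall_le ht0 ht) _
    _ = μ (Metric.ball (0 : E) r) ^ (1 - t / finrank ℝ E) *
          ((4 * finrank ℝ E + 2) *
            (μ B ^ (1 - t / finrank ℝ E) * μ B ^ (t / finrank ℝ E) * μ (dyadicAnnulus E 1))) := by
        rw [← hsplit]
    _ = _ := by ring

theorem exists_fractionalPerimeter_ball_le : ∃ C : ℝ≥0, ∀ r t : ℝ, 0 < r → 0 < t → t < 1 →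
    ENNReal.ofReal (t * (1 - t)) * fractionalPerimeter μ t (Metric.ball (0 : E) r) ≤
      C * μ (Metric.ball (0 : E) r) ^ (1 - t / finrank ℝ E) := by
  set B := Metric.ball (0 : E) 1
  have hBtop : μ B ≠ ∞ := measure_ball_lt_top.ne
  have hvtop := (measure_dyadicAnnulus_lt_top (E := E) (μ := μ) 1).ne
  refine ⟨((4 * finrank ℝ E + 2) * (max 1 (μ B) * μ (dyadicAnnulus E 1))).toNNReal,
    fun r t hr ht0 ht => ?_⟩
  have hdim : (1 : ℝ) ≤ finrank ℝ E := mod_cast Module.finrank_pos (R := ℝ) (M := E)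
  have hmax : μ B ^ (t / finrank ℝ E) ≤ max 1 (μ B) :=
    calc μ B ^ (t / finrank ℝ E) ≤ max 1 (μ B) ^ (t / finrank ℝ E) := by
          gcongr
          exact le_max_right _ _
      _ ≤ max 1 (μ B) ^ (1 : ℝ) := ENNReal.rpow_le_rpow_of_exponent_le (le_max_left _ _)
          ((div_le_one₀ (by positivity)).2 (ht.le.trans hdim))
      _ = max 1 (μ B) := ENNReal.rpow_one _
  rw [ENNReal.coe_toNNReal (by finiteness)]
  exact (ofReal_mul_fractionalPerimeter_ball_le hr ht0 ht).trans (by gcongr)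

end FractionalPerimeter

section SmallParameters

lemma exists_rpow_le {δ η : ℝ} (hδ : 0 < δ) (hη : 0 < η) :
    ∃ ε : ℝ, 0 < ε ∧ ε ≤ 1 ∧ ∀ x u : ℝ, 0 ≤ x → x ≤ ε → δ ≤ u → x ^ u ≤ η := by
  set b := min 1 η
  have hb : 0 < b := lt_min one_pos hη
  have hε1 : b ^ δ⁻¹ ≤ 1 := Real.rpow_le_one hb.le (min_le_left _ _) (by positivity)
  refine ⟨b ^ δ⁻¹, by positivity, hε1, fun x u hx hxε hu => ?_⟩
  calc x ^ u ≤ (b ^ δ⁻¹) ^ u := Real.rpow_le_rpow hx hxε (hδ.le.trans hu)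
    _ ≤ (b ^ δ⁻¹) ^ δ := Real.rpow_le_rpow_of_exponent_ge (by positivity) hε1 hu
    _ = b := Real.rpow_inv_rpow hb.le hδ.ne'
    _ ≤ η := min_le_right _ _

lemma div_mul_add_rpow_le {m M θ : ℝ} (hm : 0 < m) (hmM : m ≤ M) (hθ0 : 0 ≤ θ) (hθ1 : θ ≤ 1) :
    m / M * (M + m) ^ (1 - θ) ≤ 2 * ((m / M) ^ θ * m ^ (1 - θ)) := by
  have hM : 0 < M := hm.trans_le hmM
  have hadd : (M + m) ^ (1 - θ) ≤ 2 * M ^ (1 - θ) :=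
    calc (M + m) ^ (1 - θ) ≤ (2 * M) ^ (1 - θ) := by
          gcongr
          linarith
      _ = 2 ^ (1 - θ) * M ^ (1 - θ) := Real.mul_rpow two_pos.le hM.le
      _ ≤ 2 * M ^ (1 - θ) := by
          gcongr
          exact Real.rpow_le_self_of_one_le one_le_two (by linarith)
  have hhom : m / M * M ^ (1 - θ) = (m / M) ^ θ * m ^ (1 - θ) := by
    rw [Real.div_rpow hm.le hM.le, Real.rpow_sub hM, Real.rpow_sub hm, Real.rpow_one,
      Real.rpow_one]
    field_simp
  calc m / M * (M + m) ^ (1 - θ) ≤ m / M * (2 * M ^ (1 - θ)) := by gcongr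
    _ = 2 * (m / M * M ^ (1 - θ)) := by ring
    _ = 2 * ((m / M) ^ θ * m ^ (1 - θ)) := by rw [hhom]

lemma toReal_le_of_le_ofReal_min_mul {ε₁ ε₂ : ℝ} {V W : ℝ≥0∞} (hε₁ : 0 ≤ ε₁) (hε₂ : 0 ≤ ε₂)
    (hW : W ≠ ∞) (hV : V ≤ ENNReal.ofReal (min ε₁ ε₂) * min 1 W) :
    V.toReal ≤ ε₁ ∧ V.toReal ≤ ε₂ * W.toReal := by
  have hV₁ : V ≤ ENNReal.ofReal ε₁ * 1 := hV.trans (by gcongr <;> exact min_le_left _ _)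
  have hV₂ : V ≤ ENNReal.ofReal ε₂ * W := hV.trans (by gcongr <;> exact min_le_right _ _)
  refine ⟨ENNReal.toReal_le_of_le_ofReal hε₁ (by rwa [mul_one] at hV₁), ?_⟩
  have hreal := ENNReal.toReal_mono (by finiteness) hV₂
  rwa [ENNReal.toReal_mul, ENNReal.toReal_ofReal hε₂] at hreal

end SmallParameters

section FreeEnergy

variable {N : ℕ} {s t : ℝ} {A F₁ F₂ : Set (EuclideanSpace ℝ (Fin N))}

lemma fracPer_eq_fractionalPerimeter (hA : MeasurableSet A) (α : ℝ) :
    fracPer N α A = fractionalPerimeter volume α A := by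
  rw [fracPer, interEnergy, fractionalPerimeter,
    ← lintegral_lintegral_compl_eq_lintegral_translationDefect_mul hA (measurable_fracKernel α)]
  simp only [fracKernel, finrank_euclideanSpace_fin, neg_add_eq_sub, norm_sub_rev]

lemma fracPer_union_le (α : ℝ) (F₁ F₂ : Set (EuclideanSpace ℝ (Fin N))) :
    fracPer N α (F₁ ∪ F₂) ≤ fracPer N α F₁ + fracPer N α F₂ := by
  refine (lintegral_union_le _ _ _).trans ?_
  unfold fracPer interEnergy
  gcongr
  · exact Set.subset_union_left
  · exact Set.subset_union_right

lemma fracPer_ne_top_of_lt (hA : MeasurableSet A) (hAtop : volume A ≠ ∞) (hs : 0 < s)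
    (hst : s < t) (ht : t < 1) (hP : fracPer N t A ≠ ∞) : fracPer N s A ≠ ∞ := by
  rw [fracPer_eq_fractionalPerimeter hA] at hP ⊢
  exact fractionalPerimeter_ne_top_of_lt hA hAtop hs hst ht hP

lemma fracPer_smul (hA : MeasurableSet A) (α : ℝ) {c : ℝ} (hc : 0 < c) :
    fracPer N α (c • A) = ENNReal.ofReal (c ^ (N - α)) * fracPer N α A := by
  rw [fracPer_eq_fractionalPerimeter (hA.const_smul₀ c), fracPer_eq_fractionalPerimeter hA,
    fractionalPerimeter_smul α hc, finrank_euclideanSpace_fin]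

section UniformBounds

lemma fracPer_ball_ne_top [NeZero N] (ht0 : 0 < t) (ht : t < 1) {r : ℝ} (hr : 0 < r) :
    fracPer N t (Metric.ball 0 r) ≠ ∞ := by
  obtain ⟨C, hC⟩ := exists_fractionalPerimeter_ball_le
    (volume : Measure (EuclideanSpace ℝ (Fin N)))
  have hr0 : volume (Metric.ball (0 : EuclideanSpace ℝ (Fin N)) r) ≠ 0 :=
    (Metric.measure_ball_pos volume 0 hr).ne'
  have hbound := ne_top_of_le_ne_top (ENNReal.mul_ne_top ENNReal.coe_ne_top
    (ENNReal.rpow_ne_top_of_ne_zero hr0 measure_ball_lt_top.ne)) (hC r t hr ht0 ht)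
  rw [fracPer_eq_fractionalPerimeter measurableSet_ball]
  refine (ENNReal.lt_top_of_mul_ne_top_right hbound ?_).ne
  exact (ENNReal.ofReal_pos.2 (mul_pos ht0 (sub_pos.2 ht))).ne'

variable (N) [NeZero N]

lemma exists_volume_rpow_le_mul_fracPer :
    ∃ C : ℝ≥0, ∀ (A : Set (EuclideanSpace ℝ (Fin N))) (t : ℝ), MeasurableSet A →
      0 ≤ t → t < 1 → volume A ≠ 0 → volume A ≠ ∞ → fracPer N t A ≠ ∞ →
      (volume A).toReal ^ (1 - t / N) ≤ C * ((1 - t) * (fracPer N t A).toReal) := by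
  obtain ⟨C, hC⟩ := exists_fractional_isoperimetric
    (volume : Measure (EuclideanSpace ℝ (Fin N)))
  refine ⟨C, fun A t hA ht0 ht hA0 hAtop hP => ?_⟩
  have hiso := hC A t hA ht0 ht hA0 hAtop
  rw [← fracPer_eq_fractionalPerimeter hA, finrank_euclideanSpace_fin] at hiso
  simpa only [ENNReal.toReal_mul, ENNReal.toReal_rpow, ENNReal.coe_toReal,
    ENNReal.toReal_ofReal (sub_nonneg.2 ht.le)] using ENNReal.toReal_mono (by finiteness) hiso

lemma exists_mul_fracPer_le_volume_rpow_mul_fracPer :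
    ∃ C : ℝ≥0, ∀ (A : Set (EuclideanSpace ℝ (Fin N))) (s t : ℝ), MeasurableSet A →
      0 < s → s < t → t < 1 → volume A ≠ 0 → volume A ≠ ∞ → fracPer N t A ≠ ∞ →
      (t - s) * (s * (fracPer N s A).toReal) ≤
        C * (volume A).toReal ^ ((t - s) / N) * ((1 - t) * (fracPer N t A).toReal) := by
  obtain ⟨C, hC⟩ := exists_fractionalPerimeter_interpolation
    (volume : Measure (EuclideanSpace ℝ (Fin N)))
  refine ⟨C, fun A s t hA hs hst ht hA0 hAtop hP => ?_⟩
  have hts : 0 < t - s := sub_pos.2 hst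
  have hvol : volume A ^ ((t - s) / N) ≠ ∞ := ENNReal.rpow_ne_top_of_ne_zero hA0 hAtop
  have hinterp := hC A s t hA hs hst ht hA0 hAtop
  simp only [← fracPer_eq_fractionalPerimeter hA, finrank_euclideanSpace_fin] at hinterp
  simpa only [ENNReal.toReal_mul, ENNReal.toReal_rpow, ENNReal.coe_toReal, mul_assoc,
    ENNReal.toReal_ofReal (sub_nonneg.2 ht.le), ENNReal.toReal_ofReal (mul_pos hts hs).le]
    using ENNReal.toReal_mono (by finiteness) hinterp

lemma exists_mul_fracPer_ball_le : ∃ C : ℝ≥0, ∀ r t : ℝ, 0 < r → 0 < t → t < 1 →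
    t * ((1 - t) * (fracPer N t (Metric.ball 0 r)).toReal) ≤
      C * (volume (Metric.ball (0 : EuclideanSpace ℝ (Fin N)) r)).toReal ^ (1 - t / N) := by
  obtain ⟨C, hC⟩ := exists_fractionalPerimeter_ball_le
    (volume : Measure (EuclideanSpace ℝ (Fin N)))
  refine ⟨C, fun r t hr ht0 ht => ?_⟩
  have hr0 : volume (Metric.ball (0 : EuclideanSpace ℝ (Fin N)) r) ≠ 0 :=
    (Metric.measure_ball_pos volume 0 hr).ne'
  have hvol : volume (Metric.ball (0 : EuclideanSpace ℝ (Fin N)) r) ^ (1 - t / N) ≠ ∞ :=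
    ENNReal.rpow_ne_top_of_ne_zero hr0 measure_ball_lt_top.ne
  have hball := hC r t hr ht0 ht
  rw [← fracPer_eq_fractionalPerimeter measurableSet_ball, finrank_euclideanSpace_fin] at hball
  simpa only [ENNReal.toReal_mul, ENNReal.toReal_rpow, ENNReal.coe_toReal, mul_assoc,
    ENNReal.toReal_ofReal (mul_pos ht0 (sub_pos.2 ht)).le]
    using ENNReal.toReal_mono (by finiteness) hball

end UniformBounds

lemma freeEnergy_le_mul_fracPer (hs : 0 ≤ s) (t : ℝ) (A : Set (EuclideanSpace ℝ (Fin N))) :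
    freeEnergy N s t A ≤ (1 - t) * (fracPer N t A).toReal :=
  sub_le_self _ (by positivity)

lemma fracPer_ne_top_of_deficit_le {P : ℝ≥0∞} {b : ℝ} (ht : t < 1) (hP : P ≠ ∞)
    (hdeficit : ENNReal.ofReal (1 - t) * (fracPer N t F₁ + fracPer N t F₂ - P) ≤
      ENNReal.ofReal b) :
    fracPer N t F₁ ≠ ∞ ∧ fracPer N t F₂ ≠ ∞ := by
  have hdiff : fracPer N t F₁ + fracPer N t F₂ - P ≠ ∞ :=
    (ENNReal.lt_top_of_mul_ne_top_right (ne_top_of_le_ne_top ENNReal.ofReal_ne_top hdeficit)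
      (ENNReal.ofReal_pos.2 (sub_pos.2 ht)).ne').ne
  exact ENNReal.add_ne_top.1 (ne_top_of_le_ne_top (ENNReal.add_ne_top.2 ⟨hdiff, hP⟩) le_tsub_add)

lemma freeEnergy_add_le_freeEnergy_union {b : ℝ} (hs : 0 ≤ s) (ht : t ≤ 1) (hb : 0 ≤ b)
    (hPs₁ : fracPer N s F₁ ≠ ∞) (hPs₂ : fracPer N s F₂ ≠ ∞)
    (hPt₁ : fracPer N t F₁ ≠ ∞) (hPt₂ : fracPer N t F₂ ≠ ∞)
    (hdeficit : ENNReal.ofReal (1 - t) *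
      (fracPer N t F₁ + fracPer N t F₂ - fracPer N t (F₁ ∪ F₂)) ≤ ENNReal.ofReal b) :
    freeEnergy N s t F₁ + freeEnergy N s t F₂ - b ≤ freeEnergy N s t (F₁ ∪ F₂) := by
  have hPt : fracPer N t (F₁ ∪ F₂) ≠ ∞ :=
    ne_top_of_le_ne_top (ENNReal.add_ne_top.2 ⟨hPt₁, hPt₂⟩) (fracPer_union_le t F₁ F₂)
  have hlocal : (1 - t) * ((fracPer N t F₁).toReal + (fracPer N t F₂).toReal -
      (fracPer N t (F₁ ∪ F₂)).toReal) ≤ b := by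
    have hreal := ENNReal.toReal_mono ENNReal.ofReal_ne_top hdeficit
    rw [ENNReal.toReal_mul, ENNReal.toReal_ofReal (sub_nonneg.2 ht),
      ENNReal.toReal_ofReal hb] at hreal
    rw [← ENNReal.toReal_add hPt₁ hPt₂]
    exact (mul_le_mul_of_nonneg_left (ENNReal.le_toReal_sub hPt) (sub_nonneg.2 ht)).trans hreal
  have hsubadd : (fracPer N s (F₁ ∪ F₂)).toReal ≤
      (fracPer N s F₁).toReal + (fracPer N s F₂).toReal := by
    rw [← ENNReal.toReal_add hPs₁ hPs₂]
    exact ENNReal.toReal_mono (ENNReal.add_ne_top.2 ⟨hPs₁, hPs₂⟩) (fracPer_union_le s F₁ F₂)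
  unfold freeEnergy
  linarith [mul_le_mul_of_nonneg_left hsubadd hs]

section Dilation

lemma freeEnergy_smul_le (hA : MeasurableSet A) (hs : 0 ≤ s) (hst : s ≤ t) {c : ℝ}
    (hc : 1 ≤ c) : freeEnergy N s t (c • A) ≤ c ^ (N - t) * freeEnergy N s t A := by
  have hc0 : 0 < c := one_pos.trans_le hc
  have hexp : c ^ (N - t) ≤ c ^ (N - s) := Real.rpow_le_rpow_of_exponent_le hc (by linarith)
  have hPs : 0 ≤ s * (fracPer N s A).toReal := by positivity
  rw [freeEnergy, freeEnergy, fracPer_smul hA t hc0, fracPer_smul hA s hc0, ENNReal.toReal_mul,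
    ENNReal.toReal_mul, ENNReal.toReal_ofReal (by positivity),
    ENNReal.toReal_ofReal (by positivity)]
  linarith [mul_le_mul_of_nonneg_right hexp hPs]

variable [NeZero N] {τ : ℝ}

lemma volume_one_add_rpow_smul (hτ : 0 ≤ τ) (A : Set (EuclideanSpace ℝ (Fin N))) :
    volume (((1 + τ) ^ ((1 : ℝ) / N)) • A) = ENNReal.ofReal (1 + τ) * volume A := by
  have hroot : ((1 + τ) ^ ((1 : ℝ) / N)) ^ N = 1 + τ := by
    rw [one_div, Real.rpow_inv_natCast_pow (by positivity) (NeZero.ne N)]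
  rw [Measure.addHaar_smul, finrank_euclideanSpace_fin, hroot, abs_of_nonneg (by positivity)]

lemma freeEnergy_one_add_rpow_smul_le (hA : MeasurableSet A) (hs : 0 ≤ s) (hst : s ≤ t)
    (ht : t ≤ 1) (hτ : 0 ≤ τ) :
    freeEnergy N s t (((1 + τ) ^ ((1 : ℝ) / N)) • A) ≤
      freeEnergy N s t A + τ * max (freeEnergy N s t A) 0 := by
  set c := (1 + τ) ^ ((1 : ℝ) / N)
  have hN : (1 : ℝ) ≤ N := by exact_mod_cast NeZero.one_le
  have hc : 1 ≤ c := Real.one_le_rpow (by linarith) (by positivity)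
  have hlower : 1 ≤ c ^ (N - t) := Real.one_le_rpow hc (by linarith)
  have hupper : c ^ (N - t) ≤ 1 + τ :=
    calc c ^ (N - t) ≤ c ^ (N : ℝ) := Real.rpow_le_rpow_of_exponent_le hc (by linarith)
      _ = 1 + τ := by
        simp only [c, one_div, Real.rpow_natCast]
        exact Real.rpow_inv_natCast_pow (by positivity) (NeZero.ne N)
  refine (freeEnergy_smul_le hA hs hst hc).trans ?_
  rcases le_total (freeEnergy N s t A) 0 with hneg | hpos
  · rw [max_eq_right hneg]
    nlinarith
  · rw [max_eq_left hpos]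
    nlinarith

lemma volume_one_add_div_rpow_smul (hA0 : volume A ≠ 0) (hAtop : volume A ≠ ∞) {V : ℝ≥0∞}
    (hV : V ≠ ∞) :
    volume (((1 + V.toReal / (volume A).toReal) ^ ((1 : ℝ) / N)) • A) = volume A + V := by
  rw [volume_one_add_rpow_smul (by positivity), ← ENNReal.toReal_div,
    ENNReal.ofReal_add zero_le_one ENNReal.toReal_nonneg, ENNReal.ofReal_one,
    ENNReal.ofReal_toReal (ENNReal.div_ne_top hV hA0), add_mul, one_mul,
    ENNReal.div_mul_cancel hA0 hAtop]

lemma freeEnergy_one_add_rpow_smul_lt {b d e : ℝ} (hA : MeasurableSet A) (hs : 0 ≤ s)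
    (hst : s ≤ t) (ht : t ≤ 1) (hτ : 0 ≤ τ) (hgap : freeEnergy N s t A + d ≤ e) (heb : e ≤ b)
    (hd : τ * max b 0 < d) : freeEnergy N s t (((1 + τ) ^ ((1 : ℝ) / N)) • A) < e := by
  have hd0 : 0 < d := (mul_nonneg hτ (le_max_right b 0)).trans_lt hd
  calc freeEnergy N s t (((1 + τ) ^ ((1 : ℝ) / N)) • A)
      ≤ freeEnergy N s t A + τ * max (freeEnergy N s t A) 0 :=
        freeEnergy_one_add_rpow_smul_le hA hs hst ht hτ
    _ ≤ freeEnergy N s t A + τ * max b 0 := by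
        gcongr
        linarith
    _ < freeEnergy N s t A + d := by gcongr
    _ ≤ e := hgap

lemma exists_volume_ball_eq {V : ℝ≥0∞} (hV0 : V ≠ 0) (hVtop : V ≠ ∞) :
    ∃ r : ℝ, 0 < r ∧ volume (Metric.ball (0 : EuclideanSpace ℝ (Fin N)) r) = V := by
  obtain ⟨r, hr, hvol⟩ := exists_smul_measure_eq
    (Metric.measure_ball_pos volume (0 : EuclideanSpace ℝ (Fin N)) one_pos).ne'
    measure_ball_lt_top.ne hV0 hVtop
  exact ⟨r, hr, by rwa [smul_unitBall_of_pos hr] at hvol⟩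

end Dilation

section SmallVolume

lemma mul_fracPer_toReal_pos [NeZero N] (hA : MeasurableSet A) (ht0 : 0 ≤ t) (ht : t < 1)
    (hA0 : volume A ≠ 0) (hAtop : volume A ≠ ∞) (hP : fracPer N t A ≠ ∞) :
    0 < (1 - t) * (fracPer N t A).toReal := by
  obtain ⟨C, hC⟩ := exists_volume_rpow_le_mul_fracPer N
  have hvol : 0 < (volume A).toReal ^ (1 - t / N) :=
    Real.rpow_pos_of_pos (ENNReal.toReal_pos hA0 hAtop) _
  exact pos_of_mul_pos_right (hvol.trans_le (hC A t hA ht0 ht hA0 hAtop hP)) C.2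

variable (N) [NeZero N]

lemma exists_half_mul_fracPer_le_freeEnergy {δ : ℝ} (hδ : 0 < δ) :
    ∃ ε : ℝ, 0 < ε ∧ ∀ (A : Set (EuclideanSpace ℝ (Fin N))) (s t : ℝ), MeasurableSet A →
      0 < s → t < 1 → δ ≤ t - s → volume A ≠ 0 → volume A ≠ ∞ → fracPer N t A ≠ ∞ →
      (volume A).toReal ≤ ε → (1 - t) * (fracPer N t A).toReal / 2 ≤ freeEnergy N s t A := by
  obtain ⟨C, hC⟩ := exists_mul_fracPer_le_volume_rpow_mul_fracPer N
  have hN : (0 : ℝ) < N := by exact_mod_cast NeZero.pos N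
  obtain ⟨ε, hε, -, hsmall⟩ :=
    exists_rpow_le (div_pos hδ hN) (show 0 < δ / (2 * (C + 1)) by positivity)
  refine ⟨ε, hε, fun A s t hA hs ht hδts hA0 hAtop hP hvol => ?_⟩
  have hPt : 0 ≤ (1 - t) * (fracPer N t A).toReal :=
    mul_nonneg (sub_nonneg.2 ht.le) ENNReal.toReal_nonneg
  have hinterp := hC A s t hA hs (by linarith) ht hA0 hAtop hP
  have hη := hsmall _ ((t - s) / N) ENNReal.toReal_nonneg hvol (by gcongr)
  have hcoeff : C * (δ / (2 * (C + 1))) ≤ δ / 2 := by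
    rw [mul_div_assoc', div_le_div_iff₀ (by positivity) two_pos]
    nlinarith
  have hscaled : δ * (s * (fracPer N s A).toReal) ≤
      δ * ((1 - t) * (fracPer N t A).toReal / 2) :=
    calc δ * (s * (fracPer N s A).toReal) ≤ (t - s) * (s * (fracPer N s A).toReal) := by gcongr
      _ ≤ C * (volume A).toReal ^ ((t - s) / N) * ((1 - t) * (fracPer N t A).toReal) := hinterp
      _ ≤ δ / 2 * ((1 - t) * (fracPer N t A).toReal) :=
        mul_le_mul_of_nonneg_right ((mul_le_mul_of_nonneg_left hη C.2).trans hcoeff) hPt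
      _ = δ * ((1 - t) * (fracPer N t A).toReal / 2) := by ring
  have := le_of_mul_le_mul_left hscaled hδ
  unfold freeEnergy
  linarith

lemma exists_div_mul_fracPer_ball_le :
    ∃ C : ℝ≥0, ∀ (A : Set (EuclideanSpace ℝ (Fin N))) (M r t : ℝ), MeasurableSet A →
      0 < t → t < 1 → volume A ≠ 0 → volume A ≠ ∞ → fracPer N t A ≠ ∞ → 0 < r →
      (volume (Metric.ball (0 : EuclideanSpace ℝ (Fin N)) r)).toReal = M + (volume A).toReal →
      (volume A).toReal ≤ M →
      t * ((volume A).toReal / M * ((1 - t) * (fracPer N t (Metric.ball 0 r)).toReal)) ≤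
        C * ((volume A).toReal / M) ^ (t / N) * ((1 - t) * (fracPer N t A).toReal) := by
  obtain ⟨C, hC⟩ := exists_volume_rpow_le_mul_fracPer N
  obtain ⟨D, hD⟩ := exists_mul_fracPer_ball_le N
  refine ⟨2 * D * C, fun A M r t hA ht0 ht hA0 hAtop hP hr hball hvol => ?_⟩
  have hN : (1 : ℝ) ≤ N := by exact_mod_cast NeZero.one_le
  have hm : 0 < (volume A).toReal := ENNReal.toReal_pos hA0 hAtop
  have hM : 0 < M := hm.trans_le hvol
  have hiso := hC A t hA ht0.le ht hA0 hAtop hP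
  have hupper := hD r t hr ht0 ht
  rw [hball] at hupper
  set m := (volume A).toReal
  set X := (1 - t) * (fracPer N t A).toReal
  set Y := (1 - t) * (fracPer N t (Metric.ball 0 r)).toReal
  have hθ : t / N ≤ 1 := (div_le_one (by positivity)).2 (by linarith)
  calc t * (m / M * Y) = m / M * (t * Y) := mul_left_comm _ _ _
    _ ≤ m / M * (D * (M + m) ^ (1 - t / N)) := by gcongr
    _ = D * (m / M * (M + m) ^ (1 - t / N)) := mul_left_comm _ _ _
    _ ≤ D * (2 * ((m / M) ^ (t / N) * m ^ (1 - t / N))) :=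
        mul_le_mul_of_nonneg_left (div_mul_add_rpow_le hm hvol (by positivity) hθ) D.2
    _ ≤ D * (2 * ((m / M) ^ (t / N) * (C * X))) := by gcongr
    _ = (2 * D * C : ℝ≥0) * (m / M) ^ (t / N) * X := by
        push_cast
        ring

lemma exists_div_mul_freeEnergy_ball_lt {δ : ℝ} (hδ : 0 < δ) :
    ∃ ε : ℝ, 0 < ε ∧ ∀ (A : Set (EuclideanSpace ℝ (Fin N))) (M r s t : ℝ), MeasurableSet A →
      0 ≤ s → δ ≤ t → t < 1 → volume A ≠ 0 → volume A ≠ ∞ → fracPer N t A ≠ ∞ → 0 < M → 0 < r →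
      (volume (Metric.ball (0 : EuclideanSpace ℝ (Fin N)) r)).toReal = M + (volume A).toReal →
      (volume A).toReal ≤ ε * M →
      (volume A).toReal / M * max (freeEnergy N s t (Metric.ball 0 r)) 0 <
        (1 - t) * (fracPer N t A).toReal / 4 := by
  obtain ⟨C, hC⟩ := exists_div_mul_fracPer_ball_le N
  have hN : (0 : ℝ) < N := by exact_mod_cast NeZero.pos N
  obtain ⟨ε, hε, hε1, hsmall⟩ :=
    exists_rpow_le (div_pos hδ hN) (show 0 < δ / (4 * (C + 1)) by positivity)
  refine ⟨ε, hε, fun A M r s t hA hs hδt ht hA0 hAtop hP hM hr hball hvol => ?_⟩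
  have ht0 : 0 < t := hδ.trans_le hδt
  have hX := mul_fracPer_toReal_pos hA ht0.le ht hA0 hAtop hP
  have hη := hsmall ((volume A).toReal / M) (t / N) (by positivity) ((div_le_iff₀ hM).2 hvol)
    (by gcongr)
  have hbound := hC A M r t hA ht0 ht hA0 hAtop hP hr hball
    (hvol.trans (mul_le_of_le_one_left hM.le hε1))
  have hmax : max (freeEnergy N s t (Metric.ball 0 r)) 0 ≤
      (1 - t) * (fracPer N t (Metric.ball 0 r)).toReal :=
    max_le (freeEnergy_le_mul_fracPer hs t _)
      (mul_nonneg (sub_nonneg.2 ht.le) ENNReal.toReal_nonneg)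
  have hcoeff : C * (δ / (4 * (C + 1))) < δ / 4 := by
    rw [mul_div_assoc', div_lt_div_iff₀ (by positivity) four_pos]
    nlinarith
  set X := (1 - t) * (fracPer N t A).toReal
  set τ := (volume A).toReal / M
  refine lt_of_mul_lt_mul_left ?_ hδ.le
  calc δ * (τ * max (freeEnergy N s t (Metric.ball 0 r)) 0)
      ≤ t * (τ * ((1 - t) * (fracPer N t (Metric.ball 0 r)).toReal)) := by gcongr
    _ ≤ C * τ ^ (t / N) * X := hbound
    _ ≤ C * (δ / (4 * (C + 1))) * X := by gcongr
    _ < δ / 4 * X := by gcongr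
    _ = δ * (X / 4) := by ring

end SmallVolume

end FreeEnergy

/-- Non-optimality criterion. -/
theorem stmt9 (N : ℕ) (hN : 0 < N) (δ₀ : ℝ) (hδ : δ₀ ∈ Set.Ioo (0 : ℝ) 1) :
    ∃ ε : ℝ, 0 < ε ∧
      ∀ s t : ℝ, 0 < s → s < t → t < 1 → δ₀ ≤ t - s →
        ∀ F F₁ F₂ : Set (EuclideanSpace ℝ (Fin N)),
          MeasurableSet F₁ → MeasurableSet F₂ → F = F₁ ∪ F₂ →
          volume (F₁ ∩ F₂) = 0 → fracPer N t F < ⊤ → volume F < ⊤ →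
          0 < volume F₁ → 0 < volume F₂ →
          volume F₂ ≤ ENNReal.ofReal ε * min 1 (volume F₁) →
          ENNReal.ofReal (1 - t) * (fracPer N t F₁ + fracPer N t F₂ - fracPer N t F) ≤
            ENNReal.ofReal (freeEnergy N s t F₂ / 2) →
          ∃ G : Set (EuclideanSpace ℝ (Fin N)), MeasurableSet G ∧
            volume G = volume F ∧ fracPer N t G < ⊤ ∧
            freeEnergy N s t G < freeEnergy N s t F ∧
            ((∃ (z : EuclideanSpace ℝ (Fin N)) (r : ℝ), G = Metric.ball z r) ∨
              G = (fun x => ((1 + (volume F₂).toReal / (volume F₁).toReal) ^ ((1 : ℝ) / N)) • x) ''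
                F₁) := by
  have : NeZero N := ⟨hN.ne'⟩
  obtain ⟨ε₁, hε₁, hpart⟩ := exists_half_mul_fracPer_le_freeEnergy N hδ.1
  obtain ⟨ε₂, hε₂, hball⟩ := exists_div_mul_freeEnergy_ball_lt N hδ.1
  refine ⟨min ε₁ ε₂, lt_min hε₁ hε₂, ?_⟩
  rintro s t hs hst ht hts _ F₁ F₂ hF₁ hF₂ rfl hdisj hP hvol h₁ h₂ hsmall hdeficit
  obtain ⟨hv₁, hv₂⟩ := (measure_union_lt_top_iff.1 hvol).imp LT.lt.ne LT.lt.ne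
  obtain ⟨hm, hmM⟩ := toReal_le_of_le_ofReal_min_mul hε₁.le hε₂.le hv₁ hsmall
  obtain ⟨hP₁, hP₂⟩ := fracPer_ne_top_of_deficit_le ht hP.ne hdeficit
  have hadd := measure_union₀ hF₂.nullMeasurableSet hdisj
  have hX := mul_fracPer_toReal_pos hF₂ (hs.trans hst).le ht h₂.ne' hv₂ hP₂
  have hcost := hpart F₂ s t hF₂ hs ht hts h₂.ne' hv₂ hP₂ hm
  have hsplit := freeEnergy_add_le_freeEnergy_union hs.le ht.le (by linarith)
    (fracPer_ne_top_of_lt hF₁ hv₁ hs hst ht hP₁) (fracPer_ne_top_of_lt hF₂ hv₂ hs hst ht hP₂)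
    hP₁ hP₂ hdeficit
  obtain ⟨r, hr, hrvol⟩ := exists_volume_ball_eq (N := N)
    (h₁.trans_le (measure_mono Set.subset_union_left)).ne' hvol.ne
  have hgain := hball F₂ _ r s t hF₂ hs.le (by linarith) ht h₂.ne' hv₂ hP₂
    (ENNReal.toReal_pos h₁.ne' hv₁) hr (by rw [hrvol, hadd, ENNReal.toReal_add hv₁ hv₂]) hmM
  by_cases hwin : freeEnergy N s t (Metric.ball 0 r) < freeEnergy N s t (F₁ ∪ F₂)
  · exact ⟨_, measurableSet_ball, hrvol, (fracPer_ball_ne_top (hs.trans hst) ht hr).lt_top, hwin,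
      Or.inl ⟨0, r, rfl⟩⟩
  · exact ⟨_, hF₁.const_smul₀ _, by rw [volume_one_add_div_rpow_smul h₁.ne' hv₁ hv₂, hadd],
      by rw [fracPer_smul hF₁ t (by positivity)]; finiteness,
      freeEnergy_one_add_rpow_smul_lt hF₁ hs.le hst.le ht.le (by positivity) (by linarith)
        (not_lt.1 hwin) hgain, Or.inr rfl⟩
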